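/- arXiv:1403.4655 — 4 statements merged into one kernel-verified Lean document; each statement's English description precedes it below -/
import Mathlib

section
/- Let r ≥ 1 and let λ_0, λ_1, …, λ_r ∈ ℂ be pairwise distinct. Set ω(s) = ∏_{k=1}^r (s − λ_k) and w_j = 1 / ∏_{k≠j, k≥1} (λ_j − λ_k). Let n, d ∈ ℂ[X] with deg n ≤ r − 1 and deg d = r, and define α = d(λ_0)/ω(λ_0) − Σ_{j=1}^r w_j d(λ_j)/(λ_0 − λ_j), so α ≠ 0. Define φ_j = w_j n(λ_j)/α and ψ_j = w_j d(λ_j)/α for j = 1, …, r. Then for every s ∈ ℂ with s ∉ {λ_1, …, λ_r} and d(s) ≠ 0, one has n(s)/d(s) = (Σ_{j=1}^r φ_j/(s − λ_j)) / (1 + Σ_{j=1}^r ψ_j/(s − λ_j)); that is, the rational function n/d admits the barycentric representation with nodes λ_1, …, λ_r and coefficients φ_j, ψ_j. -/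
open Polynomial Finset

/-!
If `deg f ≤ r`, subtracting `c * ω` from `f`, where `c` is the coefficient of `X ^ r`, lowers the
degree below `r` without changing the values at the nodes, so Lagrange interpolation gives
`f(x) / ω(x) = c + ∑ j, w j * f(l j) / (x - l j)` away from the nodes. For `f = d` and `x = l0`
this says that `α` is the leading coefficient of `d`, whatever `l0` is. At a general point, the
formula for `n` and for `d` turns the barycentric quotient into
`(n(s) / ω(s) / α) / (d(s) / ω(s) / α)`.
-/

lemma degree_sub_C_coeff_mul_lt {R : Type*} [Ring R] [Nontrivial R] {p q : R[X]} (hq : q.Monic)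
    (hp : p.degree ≤ q.degree) : (p - C (p.coeff q.natDegree) * q).degree < q.degree := by
  rw [degree_eq_natDegree hq.ne_zero] at hp ⊢
  rw [degree_lt_iff_coeff_zero]
  intro m hm
  rw [coeff_sub, coeff_C_mul]
  rcases hm.eq_or_lt with rfl | hlt
  · rw [hq.coeff_natDegree, mul_one, sub_self]
  · rw [coeff_eq_zero_of_degree_lt (hp.trans_lt (Nat.cast_lt.2 hlt)),
      coeff_eq_zero_of_natDegree_lt hlt, mul_zero, sub_zero]

section Barycentric

open Lagrange

variable {ι F : Type*} [DecidableEq ι] [Field F] {s : Finset ι} {v : ι → F} {f n d : F[X]} {x : F}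

/-- The barycentric form `H_r` of a rational function with nodes `v i`, `i ∈ s`, numerator
coefficients `φ` and denominator coefficients `ψ`, evaluated at `x`. It is meaningful only where
`x` is not a node and the denominator does not vanish. -/
def barycentricForm (s : Finset ι) (v φ ψ : ι → F) (x : F) : F :=
  (∑ i ∈ s, φ i / (x - v i)) / (1 + ∑ i ∈ s, ψ i / (x - v i))

/-- The constant `α` normalizing the coefficients of the barycentric form of a rational function
with denominator `d`, computed at an additional node `x₀`. The weight `w_i` is
`Lagrange.nodalWeight s v i`. -/
noncomputable def barycentricScale (s : Finset ι) (v : ι → F) (d : F[X]) (x₀ : F) : F :=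
  d.eval x₀ / (nodal s v).eval x₀ - ∑ i ∈ s, nodalWeight s v i * d.eval (v i) / (x₀ - v i)

lemma eval_div_eval_nodal_eq_sum (hv : Set.InjOn v s) (hf : f.degree < #s)
    (hx : ∀ i ∈ s, x ≠ v i) :
    f.eval x / (nodal s v).eval x = ∑ i ∈ s, nodalWeight s v i * f.eval (v i) / (x - v i) := by
  rw [div_eq_iff (eval_nodal_not_at_node hx), mul_comm]
  conv_lhs => rw [eq_interpolate hv hf, eval_interpolate_not_at_node _ hx]
  simp only [div_eq_mul_inv, mul_right_comm]

lemma eval_div_eval_nodal_eq_coeff_add_sum (hv : Set.InjOn v s) (hf : f.degree ≤ #s)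
    (hx : ∀ i ∈ s, x ≠ v i) :
    f.eval x / (nodal s v).eval x =
      f.coeff #s + ∑ i ∈ s, nodalWeight s v i * f.eval (v i) / (x - v i) := by
  set g := f - C (f.coeff #s) * nodal s v with hg
  have hg_degree : g.degree < #s := by
    simpa only [natDegree_nodal, degree_nodal] using
      degree_sub_C_coeff_mul_lt (nodal_monic (s := s) (v := v)) (hf.trans_eq degree_nodal.symm)
  have hg_eval (y : F) : g.eval y = f.eval y - f.coeff #s * (nodal s v).eval y := by
    rw [hg, eval_sub, eval_mul, eval_C]
  have hg_node : ∀ i ∈ s, g.eval (v i) = f.eval (v i) := fun i hi ↦ by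
    rw [hg_eval, eval_nodal_at_node hi, mul_zero, sub_zero]
  calc f.eval x / (nodal s v).eval x
      = f.coeff #s + g.eval x / (nodal s v).eval x := by
        rw [hg_eval, sub_div, mul_div_cancel_right₀ _ (eval_nodal_not_at_node hx),
          add_sub_cancel]
    _ = f.coeff #s + ∑ i ∈ s, nodalWeight s v i * f.eval (v i) / (x - v i) := by
        rw [eval_div_eval_nodal_eq_sum hv hg_degree hx]
        exact congrArg _ (sum_congr rfl fun i hi ↦ by rw [hg_node i hi])

lemma barycentricScale_eq_coeff (hv : Set.InjOn v s) (hd : d.degree ≤ #s)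
    (hx : ∀ i ∈ s, x ≠ v i) : barycentricScale s v d x = d.coeff #s := by
  rw [barycentricScale, eval_div_eval_nodal_eq_coeff_add_sum hv hd hx, add_sub_cancel_right]

lemma barycentricForm_eq_eval_div_eval (hv : Set.InjOn v s) (hn : n.degree < #s)
    (hd : d.degree = #s) (hx : ∀ i ∈ s, x ≠ v i) :
    barycentricForm s v (fun i ↦ nodalWeight s v i * n.eval (v i) / d.coeff #s)
      (fun i ↦ nodalWeight s v i * d.eval (v i) / d.coeff #s) x = n.eval x / d.eval x := by
  have hc : d.coeff #s ≠ 0 := coeff_ne_zero_of_eq_degree hd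
  have hnum : ∑ i ∈ s, nodalWeight s v i * n.eval (v i) / d.coeff #s / (x - v i) =
      n.eval x / (nodal s v).eval x / d.coeff #s := by
    simp only [div_right_comm _ (d.coeff #s), ← sum_div]
    rw [eval_div_eval_nodal_eq_sum hv hn hx]
  have hden : 1 + ∑ i ∈ s, nodalWeight s v i * d.eval (v i) / d.coeff #s / (x - v i) =
      d.eval x / (nodal s v).eval x / d.coeff #s := by
    simp only [div_right_comm _ (d.coeff #s), ← sum_div]
    rw [eval_div_eval_nodal_eq_coeff_add_sum hv hd.le hx, add_div, div_self hc]
  rw [barycentricForm, hnum, hden, div_div_div_cancel_right₀ hc,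
    div_div_div_cancel_right₀ (eval_nodal_not_at_node hx)]

theorem barycentric_representation_general {x₀ : F} (hv : Set.InjOn v s)
    (hx₀ : ∀ i ∈ s, x₀ ≠ v i) (hn : n.degree < #s) (hd : d.degree = #s) :
    barycentricScale s v d x₀ ≠ 0 ∧
      ∀ x, (∀ i ∈ s, x ≠ v i) → d.eval x ≠ 0 →
        n.eval x / d.eval x =
          barycentricForm s v
            (fun i ↦ nodalWeight s v i * n.eval (v i) / barycentricScale s v d x₀)
            (fun i ↦ nodalWeight s v i * d.eval (v i) / barycentricScale s v d x₀) x := by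
  rw [barycentricScale_eq_coeff hv hd.le hx₀]
  exact ⟨coeff_ne_zero_of_eq_degree hd,
    fun _ hx _ ↦ (barycentricForm_eq_eval_div_eval hv hn hd hx).symm⟩

end Barycentric

/-- Barycentric representation of a proper rational function: with pairwise distinct
nodes `l0, l 1, …, l r`, `deg n ≤ r - 1`, `deg d = r`,
`α = d(l0)/ω(l0) - Σ_j w_j d(l j)/(l0 - l j)` (which is nonzero), and
`φ j = w_j n(l j)/α`, `ψ j = w_j d(l j)/α`, one has
`n(s)/d(s) = (Σ_j φ j/(s - l j)) / (1 + Σ_j ψ j/(s - l j))` away from nodes and zeros of `d`. -/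
theorem barycentric_representation (r : ℕ) (hr : 1 ≤ r) (l0 : ℂ) (l : Fin r → ℂ)
    (hinj : Function.Injective l) (h0 : ∀ j, l0 ≠ l j)
    (n d : Polynomial ℂ) (hn : n.degree ≤ (r - 1 : ℕ)) (hd : d.degree = (r : ℕ)) :
    (d.eval l0 / ∏ k, (l0 - l k)
        - ∑ j, (1 / ∏ k ∈ Finset.univ.erase j, (l j - l k)) * d.eval (l j) / (l0 - l j)) ≠ 0 ∧
    ∀ s : ℂ, (∀ j, s ≠ l j) → d.eval s ≠ 0 →
      n.eval s / d.eval s =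
        (∑ j, ((1 / ∏ k ∈ Finset.univ.erase j, (l j - l k)) * n.eval (l j) /
            (d.eval l0 / ∏ k, (l0 - l k)
              - ∑ i, (1 / ∏ k ∈ Finset.univ.erase i, (l i - l k)) * d.eval (l i) / (l0 - l i)))
          / (s - l j)) /
        (1 + ∑ j, ((1 / ∏ k ∈ Finset.univ.erase j, (l j - l k)) * d.eval (l j) /
            (d.eval l0 / ∏ k, (l0 - l k)
              - ∑ i, (1 / ∏ k ∈ Finset.univ.erase i, (l i - l k)) * d.eval (l i) / (l0 - l i)))
          / (s - l j)) := by
  have hn_lt : n.degree < r := hn.trans_lt (Nat.cast_lt.2 (Nat.sub_lt hr one_pos))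
  simpa [barycentricForm, barycentricScale, Lagrange.nodalWeight, Lagrange.eval_nodal] using
    barycentric_representation_general (s := univ) hinj.injOn (fun j _ ↦ h0 j)
      (by simpa using hn_lt) (by simpa using hd)
end

section
/- Let r ≥ 1, let λ_1, …, λ_r ∈ ℂ be pairwise distinct, and let φ, ψ ∈ ℂ^r. Define ñ(s) = Σ_{j=1}^r φ_j/(s − λ_j) and d̃(s) = 1 + Σ_{j=1}^r ψ_j/(s − λ_j). Suppose μ_1, …, μ_r ∈ ℂ are pairwise distinct, each μ_m ∉ {λ_1, …, λ_r}, and d̃(μ_m) = 0 for every m. Then for every s ∈ ℂ with s ∉ {λ_1, …, λ_r} ∪ {μ_1, …, μ_r}, one has d̃(s) ≠ 0 and ñ(s)/d̃(s) = Σ_{j=1}^r c_j/(s − μ_j), where c_j = ñ(μ_j) · ∏_{ℓ=1}^r (μ_j − λ_ℓ) / ∏_{ℓ≠j} (μ_j − μ_ℓ). In particular, in the barycentric representation of ñ/d̃ based on the relocated nodes μ_1, …, μ_r, the denominator is identically 1. -/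
open Finset

/-!
Multiplying numerator and denominator by the nodal polynomial `L = ∏ (X - l j)` turns `ñ` into a
polynomial `N` of degree less than `r` and `d̃` into a monic polynomial of degree `r`. The latter
vanishes at the `r` distinct points `μ m`, hence it is `M = ∏ (X - μ m)` and `ñ / d̃ = N / M`.
Lagrange interpolation of `N` at the simple roots of `M` expands `N / M` in partial fractions, and
`N (μ j) = ñ (μ j) * L (μ j)`.
-/

open Polynomial Lagrange

section CommRing

variable {R ι : Type*} [CommRing R] {s : Finset ι} {v : ι → R}

lemma eq_nodal_of_monic_of_eval_eq_zero [IsDomain R] {p : R[X]} (hp : p.Monic)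
    (hdeg : p.degree = #s) (hv : Set.InjOn v s) (hroot : ∀ i ∈ s, p.eval (v i) = 0) :
    p = nodal s v := by
  refine eq_of_degree_le_of_eval_index_eq s hv hdeg.le (hdeg.trans degree_nodal.symm) ?_ ?_
  · rw [hp.leadingCoeff, nodal_monic.leadingCoeff]
  · intro i hi
    rw [hroot i hi, eval_nodal_at_node hi]

variable [DecidableEq ι]

/-- The numerator of `∑ i ∈ s, a i / (X - v i)` over the common denominator `nodal s v`. -/
noncomputable def partialFractionNum (s : Finset ι) (v a : ι → R) : R[X] :=
  ∑ i ∈ s, C (a i) * nodal (s.erase i) v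

lemma degree_partialFractionNum_lt (s : Finset ι) (v a : ι → R) :
    (partialFractionNum s v a).degree < #s := by
  nontriviality R
  refine (degree_sum_le _ _).trans_lt ((Finset.sup_lt_iff (WithBot.bot_lt_coe #s)).2 ?_)
  intro i hi
  calc (C (a i) * nodal (s.erase i) v).degree
      ≤ (nodal (s.erase i) v).degree := by
        rw [← smul_eq_C_mul]
        exact degree_smul_le _ _
    _ = #(s.erase i) := degree_nodal
    _ < #s := Nat.cast_lt.2 (card_erase_lt_of_mem hi)

end CommRing

section Field

variable {F ι κ : Type*} [Field F] {s : Finset ι} {t : Finset κ}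

lemma eval_div_eval_nodal [DecidableEq κ] {p : F[X]} {v : κ → F} {x : F}
    (hdeg : p.degree < #t) (hv : Set.InjOn v t) (hx : ∀ j ∈ t, x ≠ v j) :
    p.eval x / (nodal t v).eval x =
      ∑ j ∈ t, p.eval (v j) / (∏ k ∈ t.erase j, (v j - v k)) / (x - v j) := by
  have hinterp : p.eval x = (nodal t v).eval x *
      ∑ j ∈ t, nodalWeight t v j * (x - v j)⁻¹ * p.eval (v j) := by
    rw [← eval_interpolate_not_at_node _ hx, ← eq_interpolate hv hdeg]
  rw [hinterp, mul_div_cancel_left₀ _ (eval_nodal_not_at_node hx)]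
  refine sum_congr rfl fun j _ => ?_
  rw [nodalWeight, prod_inv_distrib]
  ring

lemma eval_partialFractionNum [DecidableEq ι] {v : ι → F} (a : ι → F) {x : F}
    (hx : ∀ i ∈ s, x ≠ v i) :
    (partialFractionNum s v a).eval x =
      (∑ i ∈ s, a i / (x - v i)) * (nodal s v).eval x := by
  rw [partialFractionNum, eval_finsetSum, sum_mul]
  refine sum_congr rfl fun i hi => ?_
  have hxi : x - v i ≠ 0 := sub_ne_zero.2 (hx i hi)
  rw [nodal_eq_mul_nodal_erase hi]
  simp only [eval_mul, eval_sub, eval_X, eval_C]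
  field_simp

lemma eval_nodal_add_partialFractionNum [DecidableEq ι] {v : ι → F} (a : ι → F) {x : F}
    (hx : ∀ i ∈ s, x ≠ v i) :
    (nodal s v + partialFractionNum s v a).eval x =
      (1 + ∑ i ∈ s, a i / (x - v i)) * (nodal s v).eval x := by
  rw [eval_add, eval_partialFractionNum a hx, one_add_mul]

variable {l ψ : ι → F} {μ : κ → F}

lemma nodal_add_partialFractionNum_eq_nodal [DecidableEq ι] (hcard : #t = #s)
    (hμ : Set.InjOn μ t) (hlμ : ∀ m ∈ t, ∀ i ∈ s, μ m ≠ l i)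
    (hzero : ∀ m ∈ t, 1 + ∑ i ∈ s, ψ i / (μ m - l i) = 0) :
    nodal s l + partialFractionNum s l ψ = nodal t μ := by
  have hlt : (partialFractionNum s l ψ).degree < (nodal s l).degree :=
    (degree_partialFractionNum_lt s l ψ).trans_eq degree_nodal.symm
  refine eq_nodal_of_monic_of_eval_eq_zero (nodal_monic.add_of_left hlt) ?_ hμ fun m hm => ?_
  · rw [degree_add_eq_left_of_degree_lt hlt, degree_nodal, hcard]
  · rw [eval_nodal_add_partialFractionNum ψ (hlμ m hm), hzero m hm, zero_mul]

theorem vf_pole_relocation_general [DecidableEq κ] (φ : ι → F) (hcard : #t = #s)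
    (hμ : Set.InjOn μ t) (hlμ : ∀ m ∈ t, ∀ i ∈ s, μ m ≠ l i)
    (hzero : ∀ m ∈ t, 1 + ∑ i ∈ s, ψ i / (μ m - l i) = 0)
    {x : F} (hxl : ∀ i ∈ s, x ≠ l i) (hxμ : ∀ m ∈ t, x ≠ μ m) :
    1 + ∑ i ∈ s, ψ i / (x - l i) ≠ 0 ∧
      (∑ i ∈ s, φ i / (x - l i)) / (1 + ∑ i ∈ s, ψ i / (x - l i)) =
        ∑ j ∈ t, (∑ i ∈ s, φ i / (μ j - l i)) * (∏ i ∈ s, (μ j - l i)) /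
          (∏ k ∈ t.erase j, (μ j - μ k)) / (x - μ j) := by
  classical
  have hden : (1 + ∑ i ∈ s, ψ i / (x - l i)) * (nodal s l).eval x = (nodal t μ).eval x := by
    rw [← eval_nodal_add_partialFractionNum ψ hxl,
      nodal_add_partialFractionNum_eq_nodal hcard hμ hlμ hzero]
  refine ⟨left_ne_zero_of_mul (hden.trans_ne (eval_nodal_not_at_node hxμ)), ?_⟩
  have hdeg : (partialFractionNum s l φ).degree < #t :=
    (degree_partialFractionNum_lt s l φ).trans_eq (congrArg _ hcard.symm)
  rw [← mul_div_mul_right _ _ (eval_nodal_not_at_node hxl), hden,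
    ← eval_partialFractionNum φ hxl, eval_div_eval_nodal hdeg hμ hxμ]
  refine sum_congr rfl fun j hj => ?_
  rw [eval_partialFractionNum φ (hlμ j hj), eval_nodal]

end Field

/-- Pole relocation in Vector Fitting: if `μ 1, …, μ r` are the zeros of the barycentric
denominator `d̃(s) = 1 + Σ_j ψ j/(s - l j)`, then away from all nodes `d̃(s) ≠ 0` and
`ñ(s)/d̃(s) = Σ_j c j/(s - μ j)` with
`c j = ñ(μ j) * ∏_t (μ j - l t) / ∏_{t ≠ j} (μ j - μ t)`; in the relocated barycentric
representation the denominator is identically 1. -/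
theorem vf_pole_relocation (r : ℕ) (hr : 1 ≤ r) (l μ : Fin r → ℂ) (φ ψ : Fin r → ℂ)
    (hl : Function.Injective l) (hμ : Function.Injective μ)
    (hlμ : ∀ m j, μ m ≠ l j)
    (hzero : ∀ m, 1 + ∑ j, ψ j / (μ m - l j) = 0) :
    ∀ s : ℂ, (∀ j, s ≠ l j) → (∀ m, s ≠ μ m) →
      (1 + ∑ j, ψ j / (s - l j)) ≠ 0 ∧
      (∑ j, φ j / (s - l j)) / (1 + ∑ j, ψ j / (s - l j)) =
        ∑ j, ((∑ i, φ i / (μ j - l i)) * (∏ t, (μ j - l t)) /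
            ∏ t ∈ Finset.univ.erase j, (μ j - μ t)) / (s - μ j) := by
  intro s hsl hsμ
  exact vf_pole_relocation_general φ rfl hμ.injOn (fun m _ j _ => hlμ m j) (fun m _ => hzero m)
    (fun j _ => hsl j) (fun m _ => hsμ m)
end

section
/- Let r ≥ 1 and let λ_1, …, λ_r, μ_1, …, μ_r ∈ ℂ be 2r pairwise distinct points. Let ψ ∈ ℂ^r and define d̃(s) = 1 + Σ_{j=1}^r ψ_j/(s − λ_j); assume d̃(μ_m) = 0 for every m = 1, …, r. Then for every pair of coefficient vectors a, b ∈ ℂ^r there exist ã, b̃ ∈ ℂ^r such that for every ξ ∈ ℂ with ξ ∉ {λ_1, …, λ_r} ∪ {μ_1, …, μ_r} and every h ∈ ℂ, one has d̃(ξ) ≠ 0 and (1/d̃(ξ)) · ( Σ_{j=1}^r a_j/(ξ − λ_j) − h·(1 + Σ_{j=1}^r b_j/(ξ − λ_j)) ) = Σ_{j=1}^r ã_j/(ξ − μ_j) − h·(1 + Σ_{j=1}^r b̃_j/(ξ − μ_j)). -/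
/-!
Write `N_v` for the nodal polynomial `∏ j, (X - v j)`. A sum of simple fractions at the nodes `v`
is a polynomial of degree less than the number of nodes divided by `N_v`; when the nodes are
distinct, Lagrange interpolation shows that every such quotient arises in this way. Now `N_l * d̃`
is monic of degree `r` and vanishes at the `r` distinct points `μ m`, so `d̃ = N_μ / N_l`. Dividing
by `d̃` therefore replaces the common denominator `N_l` by `N_μ` and keeps the numerator. For the
denominator `1 + Σ b j / (s - l j)`, subtract `d̃` first: the remainder is the sum of simple
fractions with coefficients `b - ψ`.
-/

open Finset

open Polynomial Lagrange

section PoleNumerator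

variable {ι R : Type*} [DecidableEq ι] [CommRing R]

/-- The numerator of `∑ i ∈ s, c i / (X - v i)` over the common denominator `nodal s v`, given as a
polynomial so that it also makes sense at the nodes. -/
noncomputable def poleNumerator (s : Finset ι) (v c : ι → R) : R[X] :=
  ∑ i ∈ s, C (c i) * nodal (s.erase i) v

theorem degree_poleNumerator_lt [Nontrivial R] (s : Finset ι) (v c : ι → R) :
    (poleNumerator s v c).degree < #s := by
  rw [← mem_degreeLT]
  refine Submodule.sum_mem _ fun i hi => ?_
  rw [← smul_eq_C_mul]
  refine Submodule.smul_mem _ _ ?_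
  rw [mem_degreeLT, degree_nodal, Nat.cast_lt]
  exact card_erase_lt_of_mem hi

theorem monic_nodal_add_poleNumerator [Nontrivial R] (s : Finset ι) (v c : ι → R) :
    (nodal s v + poleNumerator s v c).Monic :=
  nodal_monic.add_of_left (degree_nodal (s := s) (v := v) ▸ degree_poleNumerator_lt s v c)

theorem degree_nodal_add_poleNumerator [Nontrivial R] (s : Finset ι) (v c : ι → R) :
    (nodal s v + poleNumerator s v c).degree = #s := by
  rw [degree_add_eq_left_of_degree_lt, degree_nodal]
  exact degree_nodal (s := s) (v := v) ▸ degree_poleNumerator_lt s v c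

end PoleNumerator

theorem eq_nodal_of_monic {ι R : Type*} [CommRing R] [IsDomain R] {s : Finset ι} {v : ι → R}
    {P : R[X]} (hv : Set.InjOn v s) (hP : P.Monic) (hdeg : P.degree = #s)
    (hzero : ∀ i ∈ s, P.eval (v i) = 0) : P = nodal s v := by
  refine eq_of_degree_le_of_eval_index_eq s hv hdeg.le (hdeg.trans degree_nodal.symm)
    (hP.leadingCoeff.trans nodal_monic.leadingCoeff.symm) fun i hi => ?_
  rw [hzero i hi, eval_nodal_at_node hi]

section SimpleFractions

variable {ι F : Type*} [Field F] {s : Finset ι} {v l μ c ψ : ι → F} {x : F}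

theorem sum_div_sub_eq_eval_poleNumerator_div [DecidableEq ι] (hx : ∀ i ∈ s, x ≠ v i) :
    ∑ i ∈ s, c i / (x - v i) = (poleNumerator s v c).eval x / (nodal s v).eval x := by
  rw [eq_div_iff (eval_nodal_not_at_node hx), poleNumerator, eval_finsetSum, sum_mul]
  refine sum_congr rfl fun i hi => ?_
  have hxi : x - v i ≠ 0 := sub_ne_zero.2 (hx i hi)
  simp only [nodal_eq_mul_nodal_erase hi, eval_mul, eval_C, eval_sub, eval_X]
  field_simp

theorem one_add_sum_div_sub_eq_eval_div [DecidableEq ι] (hx : ∀ i ∈ s, x ≠ v i) :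
    1 + ∑ i ∈ s, c i / (x - v i) =
      (nodal s v + poleNumerator s v c).eval x / (nodal s v).eval x := by
  rw [sum_div_sub_eq_eval_poleNumerator_div hx, eval_add, add_div,
    div_self (eval_nodal_not_at_node hx)]

theorem poleNumerator_nodalWeight_mul_eval [DecidableEq ι] {P : F[X]} (hv : Set.InjOn v s)
    (hP : P.degree < #s) : poleNumerator s v (fun i => nodalWeight s v i * P.eval (v i)) = P := by
  conv_rhs =>
    rw [eq_interpolate hv hP, interpolate_eq_nodalWeight_mul_nodal_div_X_sub_C]
  refine sum_congr rfl fun i hi => ?_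
  rw [nodal_erase_eq_nodal_div hi, C_mul]
  ring

theorem nodal_add_poleNumerator_eq_nodal [DecidableEq ι] (hμ : Set.InjOn μ s)
    (hμl : ∀ m ∈ s, ∀ j ∈ s, μ m ≠ l j)
    (hzero : ∀ m ∈ s, 1 + ∑ j ∈ s, ψ j / (μ m - l j) = 0) :
    nodal s l + poleNumerator s l ψ = nodal s μ := by
  refine eq_nodal_of_monic hμ (monic_nodal_add_poleNumerator s l ψ)
    (degree_nodal_add_poleNumerator s l ψ) fun m hm => ?_
  have hdiv := hzero m hm
  rw [one_add_sum_div_sub_eq_eval_div (hμl m hm)] at hdiv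
  exact (div_eq_zero_iff.1 hdiv).resolve_right (eval_nodal_not_at_node (hμl m hm))

theorem one_add_sum_div_sub_eq_nodal_div_nodal (hμ : Set.InjOn μ s)
    (hμl : ∀ m ∈ s, ∀ j ∈ s, μ m ≠ l j)
    (hzero : ∀ m ∈ s, 1 + ∑ j ∈ s, ψ j / (μ m - l j) = 0) (hx : ∀ j ∈ s, x ≠ l j) :
    1 + ∑ j ∈ s, ψ j / (x - l j) = (nodal s μ).eval x / (nodal s l).eval x := by
  classical
  rw [one_add_sum_div_sub_eq_eval_div hx, nodal_add_poleNumerator_eq_nodal hμ hμl hzero]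

theorem exists_sum_div_sub_relocated (hμ : Set.InjOn μ s) (l c : ι → F) :
    ∃ t : ι → F, ∀ x, (∀ j ∈ s, x ≠ l j) → (∀ m ∈ s, x ≠ μ m) →
      (∑ j ∈ s, c j / (x - l j)) / ((nodal s μ).eval x / (nodal s l).eval x) =
        ∑ m ∈ s, t m / (x - μ m) := by
  classical
  refine ⟨fun m => nodalWeight s μ m * (poleNumerator s l c).eval (μ m), fun x hl hm => ?_⟩
  rw [sum_div_sub_eq_eval_poleNumerator_div hl, sum_div_sub_eq_eval_poleNumerator_div hm,
    poleNumerator_nodalWeight_mul_eval hμ (degree_poleNumerator_lt s l c),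
    div_div_div_cancel_right₀ (eval_nodal_not_at_node hl)]

theorem vf_rescaled_residual_general (hμ : Set.InjOn μ s) (hμl : ∀ m ∈ s, ∀ j ∈ s, μ m ≠ l j)
    (hzero : ∀ m ∈ s, 1 + ∑ j ∈ s, ψ j / (μ m - l j) = 0) (a b : ι → F) :
    ∃ ta tb : ι → F, ∀ ξ, (∀ j ∈ s, ξ ≠ l j) → (∀ m ∈ s, ξ ≠ μ m) → ∀ h,
      (1 + ∑ j ∈ s, ψ j / (ξ - l j)) ≠ 0 ∧
      (1 / (1 + ∑ j ∈ s, ψ j / (ξ - l j))) *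
          ((∑ j ∈ s, a j / (ξ - l j)) - h * (1 + ∑ j ∈ s, b j / (ξ - l j))) =
        (∑ j ∈ s, ta j / (ξ - μ j)) - h * (1 + ∑ j ∈ s, tb j / (ξ - μ j)) := by
  obtain ⟨ta, hta⟩ := exists_sum_div_sub_relocated hμ l a
  obtain ⟨tb, htb⟩ := exists_sum_div_sub_relocated hμ l (b - ψ)
  refine ⟨ta, tb, fun ξ hl hm h => ?_⟩
  have hd := one_add_sum_div_sub_eq_nodal_div_nodal hμ hμl hzero hl
  have hd_ne : 1 + ∑ j ∈ s, ψ j / (ξ - l j) ≠ 0 :=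
    hd ▸ div_ne_zero (eval_nodal_not_at_node hm) (eval_nodal_not_at_node hl)
  have hb : ∑ j ∈ s, (b - ψ) j / (ξ - l j) =
      ∑ j ∈ s, b j / (ξ - l j) - ∑ j ∈ s, ψ j / (ξ - l j) := by
    simp only [Pi.sub_apply, sub_div, sum_sub_distrib]
  refine ⟨hd_ne, ?_⟩
  rw [← hta ξ hl hm, ← htb ξ hl hm, ← hd, hb]
  field_simp
  ring

end SimpleFractions

/-- The pointwise identity underlying one step of Vector Fitting: if the relocated nodes
`μ 1, …, μ r` are the zeros of `d̃(s) = 1 + Σ_j ψ j/(s - l j)` and the `2r` points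
`l 1, …, l r, μ 1, …, μ r` are pairwise distinct, then for any coefficients `a, b` there
exist coefficients `ta, tb` such that for every sample point `ξ` (away from all nodes)
and every measurement value `h`, the `1/d̃(ξ)`-scaled residual in the old barycentric
basis equals the unscaled residual in the relocated basis. -/
theorem vf_rescaled_residual (r : ℕ) (hr : 1 ≤ r) (l μ : Fin r → ℂ)
    (hdist : Function.Injective (Sum.elim l μ : Fin r ⊕ Fin r → ℂ))
    (ψ : Fin r → ℂ)
    (hzero : ∀ m, 1 + ∑ j, ψ j / (μ m - l j) = 0) :
    ∀ a b : Fin r → ℂ, ∃ ta tb : Fin r → ℂ,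
      ∀ ξ : ℂ, (∀ j, ξ ≠ l j) → (∀ m, ξ ≠ μ m) → ∀ h : ℂ,
        (1 + ∑ j, ψ j / (ξ - l j)) ≠ 0 ∧
        (1 / (1 + ∑ j, ψ j / (ξ - l j))) *
            ((∑ j, a j / (ξ - l j)) - h * (1 + ∑ j, b j / (ξ - l j))) =
          (∑ j, ta j / (ξ - μ j)) - h * (1 + ∑ j, tb j / (ξ - μ j)) := by
  simpa only [mem_univ, forall_const] using vf_rescaled_residual_general (l := l) (μ := μ)
    (hdist.comp Sum.inr_injective).injOn (fun _ _ _ _ => hdist.ne Sum.inr_ne_inl) fun m _ => hzero m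
end

section
/- Let r ≥ 1, λ ∈ ℂ^r and φ ∈ ℂ^r, and let 𝐞 ∈ ℂ^r be the all-ones vector. Then the characteristic polynomial of the r×r matrix diag(λ_1, …, λ_r) − φ 𝐞ᵀ equals ∏_{j=1}^r (X − λ_j) + Σ_{j=1}^r φ_j ∏_{ℓ≠j} (X − λ_ℓ). Consequently, if the λ_j are pairwise distinct, a point s ∉ {λ_1, …, λ_r} satisfies 1 + Σ_{j=1}^r φ_j/(s − λ_j) = 0 if and only if s is an eigenvalue of diag(λ_1, …, λ_r) − φ 𝐞ᵀ. -/
open Polynomial Finset Matrix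

/-!
The determinant is multilinear in the rows. In its expansion at the rows of `A + u vᵀ`, a term that
takes two or more rows from `u vᵀ` vanishes because those rows are proportional, so only `det A` and
the terms with one row replaced survive. This is the matrix determinant lemma
`det (A + u vᵀ) = det A + uᵀ (adj A)ᵀ v`. It needs no invertibility, so it applies to the
characteristic matrix `diag(X - l j) + φ 𝐞ᵀ` over the polynomial ring. At a point `s` off the nodes,
`∏ (s - l j) ≠ 0` factors out of the characteristic polynomial, and the cofactor is the barycentric
denominator.
-/

section MatrixDeterminantLemma

variable {n R : Type*} [Fintype n] [DecidableEq n] [CommRing R]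

theorem det_piecewise_smul_eq_zero (A : Matrix n n R) (u v : n → R) {s : Finset n}
    (hs : 2 ≤ #s) : det (of (s.piecewise (fun i => u i • v) A.row)) = 0 := by
  obtain ⟨i, hi, j, hj, hij⟩ := one_lt_card.mp hs
  let B : n → n → R := s.piecewise (fun _ => v) A.row
  have hBv (k : n) (hk : k ∈ s) : B k = v := piecewise_eq_of_mem _ _ _ hk
  have hB : det (of B) = 0 := det_zero_of_row_eq hij ((hBv i hi).trans (hBv j hj).symm)
  have hsmul : s.piecewise (fun k => u k • v) A.row = s.piecewise (fun k => u k • B k) B := by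
    ext1 k
    by_cases hk : k ∈ s <;> simp [B, hk]
  calc det (of (s.piecewise (fun k => u k • v) A.row))
      = det (of (s.piecewise (fun k => u k • B k) B)) := by rw [hsmul]
    _ = (∏ k ∈ s, u k) • det (of B) := detRowAlternating.toMultilinearMap.map_piecewise_smul u B s
    _ = 0 := by rw [hB, smul_zero]

theorem det_add_vecMulVec_eq_sum_updateRow (A : Matrix n n R) (u v : n → R) :
    det (A + vecMulVec u v) = det A + ∑ i, u i * det (A.updateRow i v) :=
  calc det (A + vecMulVec u v)
      = det A + detRowAlternating.toMultilinearMap.linearDeriv A.row (fun i => u i • v)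
          + ∑ s with 2 ≤ #s, det (of (s.piecewise (fun i => u i • v) A.row)) :=
        detRowAlternating.toMultilinearMap.map_add_eq_map_add_linearDeriv_add A.row _
    _ = det A + detRowAlternating.toMultilinearMap.linearDeriv A.row (fun i => u i • v) := by
        rw [sum_eq_zero fun s hs => det_piecewise_smul_eq_zero A u v (mem_filter.mp hs).2, add_zero]
    _ = det A + ∑ i, det (A.updateRow i (u i • v)) :=
        congrArg (det A + ·) (MultilinearMap.linearDeriv_apply _ _ _)
    _ = det A + ∑ i, u i * det (A.updateRow i v) := by
        simp only [det_updateRow_smul]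

theorem det_add_vecMulVec (A : Matrix n n R) (u v : n → R) :
    det (A + vecMulVec u v) = det A + u ⬝ᵥ (adjugate Aᵀ *ᵥ v) := by
  simp only [det_add_vecMulVec_eq_sum_updateRow, ← cramer_transpose_apply,
    cramer_eq_adjugate_mulVec, dotProduct]

theorem det_diagonal_add_vecMulVec (d u v : n → R) :
    det (diagonal d + vecMulVec u v) =
      ∏ j, d j + ∑ j, u j * v j * ∏ t ∈ univ.erase j, d t := by
  simp only [det_add_vecMulVec, det_diagonal, diagonal_transpose, adjugate_diagonal, dotProduct,
    mulVec_diagonal, mul_assoc, mul_comm (v _)]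

theorem charmatrix_diagonal_sub_vecMulVec (l u v : n → R) :
    charmatrix (diagonal l - vecMulVec u v) =
      diagonal (fun j => X - C (l j)) + vecMulVec (fun j => C (u j)) (fun j => C (v j)) := by
  ext1 i j
  obtain rfl | hij := eq_or_ne i j
  · simp [vecMulVec_apply, sub_add]
  · simp [vecMulVec_apply, hij]

theorem charpoly_diagonal_sub_vecMulVec (l u v : n → R) :
    (diagonal l - vecMulVec u v).charpoly =
      ∏ j, (X - C (l j)) + ∑ j, C (u j * v j) * ∏ t ∈ univ.erase j, (X - C (l t)) := by
  simp only [charpoly, charmatrix_diagonal_sub_vecMulVec, det_diagonal_add_vecMulVec, C_mul]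

end MatrixDeterminantLemma

theorem prod_mul_one_add_sum_div {ι K : Type*} [DecidableEq ι] [Semifield K] (s : Finset ι)
    {d : ι → K} (w : ι → K) (hd : ∀ j ∈ s, d j ≠ 0) :
    (∏ j ∈ s, d j) * (1 + ∑ j ∈ s, w j / d j) =
      ∏ j ∈ s, d j + ∑ j ∈ s, w j * ∏ t ∈ s.erase j, d t := by
  rw [mul_add, mul_one, mul_sum]
  congr 1
  refine sum_congr rfl fun j hj => ?_
  calc (∏ t ∈ s, d t) * (w j / d j)
      = d j * (∏ t ∈ s.erase j, d t) * (w j / d j) := by rw [mul_prod_erase s d hj]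
    _ = w j * ∏ t ∈ s.erase j, d t := by field [hd j hj]

section Spectrum

variable {n K : Type*} [Fintype n] [DecidableEq n] [Field K]

theorem eval_charpoly_diagonal_sub_vecMulVec (l u v : n → K) {s : K} (hs : ∀ j, s ≠ l j) :
    (diagonal l - vecMulVec u v).charpoly.eval s =
      (∏ j, (s - l j)) * (1 + ∑ j, u j * v j / (s - l j)) := by
  rw [prod_mul_one_add_sum_div _ _ fun j _ => sub_ne_zero.mpr (hs j),
    charpoly_diagonal_sub_vecMulVec]
  simp only [eval_add, eval_prod, eval_finsetSum, eval_mul, eval_sub, eval_X, eval_C]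

theorem mem_spectrum_diagonal_sub_vecMulVec_iff (l u v : n → K) {s : K} (hs : ∀ j, s ≠ l j) :
    s ∈ spectrum K (diagonal l - vecMulVec u v) ↔ 1 + ∑ j, u j * v j / (s - l j) = 0 := by
  have hprod : ∏ j, (s - l j) ≠ 0 := prod_ne_zero_iff.mpr fun j _ => sub_ne_zero.mpr (hs j)
  rw [mem_spectrum_iff_isRoot_charpoly, IsRoot.def, eval_charpoly_diagonal_sub_vecMulVec l u v hs,
    mul_eq_zero_iff_left hprod]

theorem vf_relocated_poles_eigenvalues_general (l φ : n → K) :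
    (Matrix.charpoly (Matrix.diagonal l - Matrix.of fun i _ => φ i) =
      ∏ j, (X - C (l j)) + ∑ j, C (φ j) * ∏ t ∈ Finset.univ.erase j, (X - C (l t))) ∧
    ∀ s : K, (∀ j, s ≠ l j) →
      (1 + ∑ j, φ j / (s - l j) = 0 ↔
        s ∈ spectrum K (Matrix.diagonal l - Matrix.of fun i _ => φ i)) := by
  have hrank : (Matrix.of fun i _ => φ i : Matrix n n K) = vecMulVec φ 1 := by
    ext i j
    simp [vecMulVec_apply]
  rw [hrank]
  refine ⟨?_, fun s hs => ?_⟩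
  · simpa only [Pi.one_apply, mul_one] using charpoly_diagonal_sub_vecMulVec l φ 1
  · simpa only [Pi.one_apply, mul_one] using (mem_spectrum_diagonal_sub_vecMulVec_iff l φ 1 hs).symm

end Spectrum

/-- The characteristic polynomial of `diag(l) - φ 𝐞ᵀ` equals
`∏_j (X - l j) + Σ_j φ j ∏_{ℓ ≠ j} (X - l ℓ)`. Consequently, for pairwise distinct `l j`,
a point `s` outside the nodes is a zero of the barycentric denominator
`1 + Σ_j φ j/(s - l j)` iff `s` is an eigenvalue of `diag(l) - φ 𝐞ᵀ`. -/
theorem vf_relocated_poles_eigenvalues (r : ℕ) (hr : 1 ≤ r) (l φ : Fin r → ℂ) :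
    (Matrix.charpoly (Matrix.diagonal l - Matrix.of fun i _ => φ i) =
      ∏ j, (X - C (l j)) + ∑ j, C (φ j) * ∏ t ∈ Finset.univ.erase j, (X - C (l t))) ∧
    (Function.Injective l → ∀ s : ℂ, (∀ j, s ≠ l j) →
      (1 + ∑ j, φ j / (s - l j) = 0 ↔
        s ∈ spectrum ℂ (Matrix.diagonal l - Matrix.of fun i _ => φ i))) :=
  (vf_relocated_poles_eigenvalues_general l φ).imp_right fun h _ => h
end
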